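/- arXiv:1811.05165 — 4 statements merged into one kernel-verified Lean document; each statement's English description precedes it below -/
import Mathlib

section
/- Let α > 0, T > 0, a ∈ ℝ, and let h : [0,T] → ℝ be continuous. Then for every t ∈ (0,T], the weakly singular integral ∫_0^t U*(0, t−s) h(s) ds = ∫_0^t (α/(4π(t−s)))^{1/2} h(s) ds converges absolutely, and the single layer heat potential is continuous across the boundary: lim_{x→a} ∫_0^t U*(x−a, t−s) h(s) ds = ∫_0^t U*(0, t−s) h(s) ds. -/
open MeasureTheory Real Filter intervalIntegral Topology

/-- The fundamental solution of the one-dimensional heat equation with heat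
capacity constant `α`: `U*(z,τ) = (α/(4πτ))^{1/2} · exp(−α z²/(4τ))` for `τ > 0`,
and `U*(z,τ) = 0` otherwise. -/
noncomputable def Ustar (α z τ : ℝ) : ℝ :=
  if 0 < τ then Real.sqrt (α / (4 * Real.pi * τ)) * Real.exp (-(α * z ^ 2) / (4 * τ)) else 0

lemma Ustar_measurable (α z : ℝ) : Measurable (Ustar α z) := by
  unfold Ustar
  refine Measurable.ite measurableSet_Ioi ?_ measurable_const
  fun_prop

lemma Ustar_nonneg (α z τ : ℝ) : 0 ≤ Ustar α z τ := by
  unfold Ustar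
  split_ifs <;> positivity

lemma Ustar_le (α z τ : ℝ) (hα : 0 < α) : Ustar α z τ ≤ Ustar α 0 τ := by
  unfold Ustar
  split_ifs with h
  · refine mul_le_mul_of_nonneg_left (Real.exp_le_exp.2 ?_) (Real.sqrt_nonneg _)
    refine div_le_div_of_nonneg_right ?_ (by positivity)
    nlinarith [mul_nonneg hα.le (sq_nonneg z)]
  · exact le_rfl

lemma Ustar_zero_integrable (α t : ℝ) (hα : 0 < α) (ht : 0 < t) :
    IntervalIntegrable (Ustar α 0) volume 0 t := by
  have h1 : IntervalIntegrable (fun x : ℝ => Real.sqrt (α / (4 * Real.pi)) * x ^ (-(1/2) : ℝ))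
      volume 0 t := (intervalIntegrable_rpow' (by norm_num)).const_mul _
  refine h1.congr ?_
  intro x hx
  rw [Set.uIoc_of_le ht.le] at hx
  have hx0 := hx.1
  simp only [Ustar, if_pos hx0]
  have e : √(α / (4 * Real.pi * x)) = √(α / (4 * Real.pi)) * (√x)⁻¹ := by
    rw [← div_div, Real.sqrt_div (by positivity), div_eq_mul_inv (√(α / (4 * Real.pi)))]
  rw [Real.rpow_neg hx0.le, ← Real.sqrt_eq_rpow, e]
  norm_num

/-- For continuous `h` and `t ∈ (0,T]`, the weakly singular integral
`∫_0^t U*(0, t−s) h(s) ds` converges absolutely, and the single layer heat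
potential is continuous across the boundary:
`lim_{x→a} ∫_0^t U*(x−a, t−s) h(s) ds = ∫_0^t U*(0, t−s) h(s) ds`. -/
theorem single_layer_potential_continuous_across_boundary (α T a : ℝ) (hα : 0 < α) (hT : 0 < T)
    (h : ℝ → ℝ) (hh : ContinuousOn h (Set.Icc 0 T))
    (t : ℝ) (ht : 0 < t) (htT : t ≤ T) :
    IntervalIntegrable (fun s => |Ustar α 0 (t - s) * h s|) volume 0 t ∧
    Tendsto (fun x => ∫ s in (0:ℝ)..t, Ustar α (x - a) (t - s) * h s) (𝓝 a)
      (𝓝 (∫ s in (0:ℝ)..t, Ustar α 0 (t - s) * h s)) := by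
  have hc : ContinuousOn h (Set.uIcc 0 t) := by
    rw [Set.uIcc_of_le ht.le]
    exact hh.mono (Set.Icc_subset_Icc le_rfl htT)
  have hU : IntervalIntegrable (fun s => Ustar α 0 (t - s)) volume 0 t := by
    have := ((Ustar_zero_integrable α t hα ht).comp_sub_left t).symm
    simpa using this
  have hI : IntervalIntegrable (fun s => |Ustar α 0 (t - s) * h s|) volume 0 t :=
    (hU.mul_continuousOn hc).abs
  refine ⟨hI, ?_⟩
  refine intervalIntegral.tendsto_integral_filter_of_dominated_convergence
    (fun s => |Ustar α 0 (t - s) * h s|) ?_ ?_ hI ?_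
  · refine Eventually.of_forall fun x => ?_
    refine AEStronglyMeasurable.mul ?_ ?_
    · exact ((Ustar_measurable α (x - a)).comp (measurable_const.sub measurable_id)).aestronglyMeasurable
    · exact (hc.mono Set.uIoc_subset_uIcc).aestronglyMeasurable measurableSet_uIoc
  · refine Eventually.of_forall fun x => Eventually.of_forall fun s _ => ?_
    rw [Real.norm_eq_abs, abs_mul, abs_mul, abs_of_nonneg (Ustar_nonneg _ _ _),
      abs_of_nonneg (Ustar_nonneg _ _ _)]
    exact mul_le_mul_of_nonneg_right (Ustar_le _ _ _ hα) (abs_nonneg _)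
  · refine Eventually.of_forall fun s _ => ?_
    have hcont : Continuous (fun x => Ustar α (x - a) (t - s) * h s) := by
      unfold Ustar
      split_ifs <;> fun_prop
    have := hcont.tendsto a
    simpa only [sub_self] using this
end

section
/- Let α > 0, T > 0, and let h : [0,T] → ℝ be continuous. Then for every t ∈ (0,T], the one-sided limit as z → 0⁺ of ∫_0^t (z/(2(t−s)))·U*(z, t−s) h(s) ds equals (1/2)·h(t). (This is the jump relation of the double layer heat potential across the lateral boundary in one space dimension: since the direct value of the double layer kernel vanishes at the boundary point, the interior Dirichlet trace of the double layer potential produces exactly the jump term (1/2)·h(t).) -/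
open MeasureTheory Real Filter intervalIntegral Topology

/-- The kernel after the substitution `s = t - (k/u)^2`. -/
lemma kernel_subst (α z u t : ℝ) (hα : 0 < α) (hz : 0 < z) (hu : 0 < u) :
    |2 * (√α * z / 2) ^ 2 / u ^ 3| *
      ((z / (2 * (t - (t - (√α * z / 2 / u) ^ 2)))) *
        Ustar α z (t - (t - (√α * z / 2 / u) ^ 2))) = (1 / √π) * rexp (-1 * u ^ 2) := by
  have hsα : 0 < √α := Real.sqrt_pos.2 hα
  have hsq : √α ^ 2 = α := Real.sq_sqrt hα.le
  have hπ : 0 < √π := Real.sqrt_pos.2 Real.pi_pos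
  have hsp : √π ^ 2 = π := Real.sq_sqrt Real.pi_pos.le
  have hτ : t - (t - (√α * z / 2 / u) ^ 2) = (√α * z / 2 / u) ^ 2 := by ring
  have hpos : 0 < (√α * z / 2 / u) ^ 2 := by positivity
  have h1 : √(α / (4 * π * (√α * z / 2 / u) ^ 2)) = u / (√π * z) := by
    rw [Real.sqrt_eq_iff_mul_self_eq_of_pos (by positivity)]
    field_simp
    rw [hsq, hsp]
    ring
  have h2 : -(α * z ^ 2) / (4 * (√α * z / 2 / u) ^ 2) = -1 * u ^ 2 := by
    nth_rewrite 1 [← hsq]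
    field_simp
    try norm_num
  rw [hτ, Ustar, if_pos hpos, h1, h2, abs_of_pos (by positivity)]
  field_simp

lemma image_subst (k t : ℝ) (hk : 0 < k) (ht : 0 < t) :
    (fun u : ℝ => t - (k / u) ^ 2) '' Set.Ioi (k / √t) = Set.Ioo 0 t := by
  have hst : 0 < √t := Real.sqrt_pos.2 ht
  have hsq : √t ^ 2 = t := Real.sq_sqrt ht.le
  ext s
  constructor
  · rintro ⟨u, hu, rfl⟩
    have hu' : k / √t < u := hu
    have hu0 : 0 < u := lt_trans (by positivity) hu'
    have : k / u < √t := by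
      rw [div_lt_iff₀ hst] at hu'
      rw [div_lt_iff₀ hu0]; linarith
    have h0 : 0 < k / u := by positivity
    constructor
    · show 0 < t - (k / u) ^ 2
      nlinarith
    · show t - (k / u) ^ 2 < t
      nlinarith
  · rintro ⟨h0, h1⟩
    have hts : 0 < t - s := by linarith
    have hsts : 0 < √(t - s) := Real.sqrt_pos.2 hts
    refine ⟨k / √(t - s), ?_, ?_⟩
    · show k / √t < k / √(t - s)
      apply div_lt_div_of_pos_left hk hsts
      exact Real.sqrt_lt_sqrt hts.le (by linarith)
    · show t - (k / (k / √(t - s))) ^ 2 = s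
      rw [div_div_cancel₀ hk.ne', Real.sq_sqrt hts.le]; ring

lemma integral_subst (α z t : ℝ) (hα : 0 < α) (hz : 0 < z) (ht : 0 < t) (h : ℝ → ℝ) :
    ∫ s in (0:ℝ)..t, (z / (2 * (t - s))) * Ustar α z (t - s) * h s =
    ∫ u, (Set.Ioi (√α * z / 2 / √t)).indicator
      (fun u => (1 / √π) * rexp (-1 * u ^ 2) * h (t - (√α * z / 2 / u) ^ 2)) u := by
  have hsα : 0 < √α := Real.sqrt_pos.2 hα
  have hst : 0 < √t := Real.sqrt_pos.2 ht
  have hk : 0 < √α * z / 2 := by positivity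
  have ha : 0 < √α * z / 2 / √t := by positivity
  rw [intervalIntegral.integral_of_le ht.le, integral_Ioc_eq_integral_Ioo,
    ← image_subst _ t hk ht,
    integral_image_eq_integral_abs_deriv_smul (f' := fun u => 2 * (√α * z / 2) ^ 2 / u ^ 3)
      measurableSet_Ioi, MeasureTheory.integral_indicator measurableSet_Ioi]
  · apply setIntegral_congr_fun measurableSet_Ioi
    intro u hu
    have hu0 : 0 < u := lt_trans ha hu
    simp only [smul_eq_mul]
    rw [← kernel_subst α z u t hα hz hu0]
    ring
  · intro u hu
    have hu0 : u ≠ 0 := (lt_trans ha hu).ne'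
    have := (((hasDerivAt_inv hu0).const_mul (√α * z / 2)).pow 2).const_sub t
    refine HasDerivAt.hasDerivWithinAt ?_
    convert this using 1
    · rfl
    push_cast
    field_simp
  · intro u hu v hv huv
    have hu0 : 0 < u := lt_trans ha hu
    have hv0 : 0 < v := lt_trans ha hv
    have h1 : (√α * z / 2 / u) ^ 2 = (√α * z / 2 / v) ^ 2 := by
      simp only at huv; linarith
    have h2 := (pow_left_inj₀ (by positivity) (by positivity) two_ne_zero).1 h1
    rw [div_eq_div_iff hu0.ne' hv0.ne'] at h2
    exact (mul_left_cancel₀ hk.ne' h2).symm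

/-- Jump relation of the double layer heat potential: for continuous `h` and
`t ∈ (0,T]`, the one-sided limit as `z → 0⁺` of
`∫_0^t (z/(2(t−s)))·U*(z, t−s) h(s) ds` equals `(1/2)·h(t)`. -/
theorem double_layer_potential_jump_relation (α T : ℝ) (hα : 0 < α) (hT : 0 < T)
    (h : ℝ → ℝ) (hh : ContinuousOn h (Set.Icc 0 T))
    (t : ℝ) (ht : 0 < t) (htT : t ≤ T) :
    Tendsto (fun z => ∫ s in (0:ℝ)..t, (z / (2 * (t - s))) * Ustar α z (t - s) * h s)
      (𝓝[>] 0) (𝓝 ((1 / 2) * h t)) := by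
  have hst : 0 < √t := Real.sqrt_pos.2 ht
  have hsα : 0 < √α := Real.sqrt_pos.2 hα
  have hval : (1 / 2) * h t =
      ∫ u, (Set.Ioi (0:ℝ)).indicator (fun u => (1 / √π) * rexp (-1 * u ^ 2) * h t) u := by
    have hπ : 0 < √π := Real.sqrt_pos.2 Real.pi_pos
    rw [MeasureTheory.integral_indicator measurableSet_Ioi, MeasureTheory.integral_mul_const,
      MeasureTheory.integral_const_mul, integral_gaussian_Ioi, div_one]
    field_simp
  obtain ⟨C, hC⟩ := isCompact_Icc.exists_bound_of_continuousOn hh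
  have hmem : ∀ z : ℝ, 0 < z → ∀ u, √α * z / 2 / √t < u →
      t - (√α * z / 2 / u) ^ 2 ∈ Set.Icc 0 T := by
    intro z hz u hu
    have h1 : t - (√α * z / 2 / u) ^ 2 ∈ Set.Ioo 0 t := by
      rw [← image_subst (√α * z / 2) t (by positivity) ht]
      exact ⟨u, hu, rfl⟩
    exact ⟨h1.1.le, h1.2.le.trans htT⟩
  rw [hval]
  refine Tendsto.congr' (f₁ := fun z => ∫ u, (Set.Ioi (√α * z / 2 / √t)).indicator
      (fun u => (1 / √π) * rexp (-1 * u ^ 2) * h (t - (√α * z / 2 / u) ^ 2)) u) ?_ ?_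
  · filter_upwards [self_mem_nhdsWithin] with z hz
    exact (integral_subst α z t hα hz ht h).symm
  refine tendsto_integral_filter_of_dominated_convergence
    (fun u => (1 / √π) * rexp (-1 * u ^ 2) * C) ?_ ?_ ?_ ?_
  · filter_upwards [self_mem_nhdsWithin] with z hz
    have hz' : 0 < z := hz
    rw [aestronglyMeasurable_indicator_iff measurableSet_Ioi]
    refine ContinuousOn.aestronglyMeasurable ?_ measurableSet_Ioi
    refine ContinuousOn.mul (by fun_prop) ?_
    refine hh.comp ?_ (fun u hu => hmem z hz u hu)
    refine continuousOn_const.sub (ContinuousOn.pow (continuousOn_const.div continuousOn_id ?_) 2)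
    intro u hu
    exact (lt_trans (by positivity) (show √α * z / 2 / √t < u from hu)).ne'
  · filter_upwards [self_mem_nhdsWithin] with z hz
    refine Eventually.of_forall fun u => ?_
    have hC0 : 0 ≤ C := (norm_nonneg _).trans (hC t ⟨ht.le, htT⟩)
    by_cases hu : u ∈ Set.Ioi (√α * z / 2 / √t)
    · rw [Set.indicator_of_mem hu, norm_mul, Real.norm_of_nonneg (by positivity)]
      exact mul_le_mul_of_nonneg_left (hC _ (hmem z hz u hu)) (by positivity)
    · rw [Set.indicator_of_notMem hu, norm_zero]
      positivity
  · exact ((integrable_exp_neg_mul_sq one_pos).const_mul _).mul_const _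
  · refine Eventually.of_forall fun u => ?_
    rcases le_or_gt u 0 with hu | hu
    · rw [Set.indicator_of_notMem (by simpa using hu)]
      refine tendsto_const_nhds.congr' ?_
      filter_upwards [self_mem_nhdsWithin] with z hz
      have hz' : 0 < z := hz
      rw [Set.indicator_of_notMem]
      have : 0 < √α * z / 2 / √t := by positivity
      simp only [Set.mem_Ioi, not_lt]; linarith
    · rw [Set.indicator_of_mem (by simpa using hu)]
      have hev : ∀ᶠ z in 𝓝[>] (0:ℝ), √α * z / 2 / √t < u := by
        have : Tendsto (fun z : ℝ => √α * z / 2 / √t) (𝓝[>] 0) (𝓝 0) := by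
          have hc : Continuous (fun z : ℝ => √α * z / 2 / √t) := by fun_prop
          have := hc.tendsto 0
          simp only [mul_zero, zero_div] at this
          exact this.mono_left nhdsWithin_le_nhds
        exact this.eventually (gt_mem_nhds hu)
      have hlim : Tendsto (fun z : ℝ => t - (√α * z / 2 / u) ^ 2) (𝓝[>] 0)
          (𝓝[Set.Icc 0 T] t) := by
        refine tendsto_nhdsWithin_iff.2 ⟨?_, ?_⟩
        · have hc : Continuous (fun z : ℝ => t - (√α * z / 2 / u) ^ 2) := by fun_prop
          have := hc.tendsto 0
          simp only [mul_zero, zero_div, ne_eq, OfNat.ofNat_ne_zero, not_false_eq_true,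
            zero_pow, sub_zero] at this
          exact this.mono_left nhdsWithin_le_nhds
        · filter_upwards [self_mem_nhdsWithin, hev] with z hz hzu
          exact hmem z hz u hzu
      have h3 := (Tendsto.comp (hh t ⟨ht.le, htT⟩) hlim).const_mul
        ((1 / √π) * rexp (-1 * u ^ 2))
      refine h3.congr' ?_
      filter_upwards [hev] with z hzu
      rw [Set.indicator_of_mem (by simpa using hzu)]
      rfl
end

section
/- Let X and Y be real normed vector spaces. Let a : X × X → ℝ be symmetric bilinear with c₁^A·‖v‖² ≤ a(v,v) and |a(u,v)| ≤ c₂^A·‖u‖·‖v‖; let b : Y × Y → ℝ be symmetric bilinear with c₁^B·‖w‖² ≤ b(w,w) and |b(u,w)| ≤ c₂^B·‖u‖·‖w‖; let d : X × Y → ℝ be bilinear with |d(v,w)| ≤ c₂^M·‖v‖_X·‖w‖_Y, all constants positive. Let φ₁, …, φ_N ∈ X and ψ₁, …, ψ_N ∈ Y be linearly independent with X_h = span{φ_k}, Y_h = span{ψ_i}, and assume the discrete inf-sup condition: sup over 0 ≠ v_h ∈ Y_h of d(τ_h, v_h)/‖v_h‖_Y ≥ c₁^M·‖τ_h‖_X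 for every τ_h ∈ X_h, with c₁^M > 0. Define the matrices A[ℓ,k] = a(φ_k, φ_ℓ), B[ℓ,k] = b(ψ_k, ψ_ℓ), M[ℓ,k] = d(φ_k, ψ_ℓ). Then M is invertible, B is positive definite, and the spectral equivalence inequalities (c₁^A·c₁^B/(c₂^M)²)·xᵀ(MᵀB⁻¹M)x ≤ xᵀAx ≤ (c₂^A·c₂^B/(c₁^M)²)·xᵀ(MᵀB⁻¹M)x hold for all x ∈ ℝ^N. -/
open Matrix

/-- Abstract operator-preconditioning theorem (spectral equivalence): let `a`
be a symmetric, bounded, elliptic bilinear form on `X`, `b` a symmetric,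
bounded, elliptic bilinear form on `Y`, and `d : X × Y → ℝ` a bounded pairing
satisfying a discrete inf-sup condition on `X_h × Y_h` with constant `c₁^M`.
Then the coupling matrix `M` is invertible, `B` is positive definite, and
`(c₁^A·c₁^B/(c₂^M)²)·xᵀ(MᵀB⁻¹M)x ≤ xᵀAx ≤ (c₂^A·c₂^B/(c₁^M)²)·xᵀ(MᵀB⁻¹M)x`
for all `x ∈ ℝ^N`. -/
theorem operator_preconditioning_spectral_equivalence
    (X Y : Type*) [NormedAddCommGroup X] [NormedSpace ℝ X]
    [NormedAddCommGroup Y] [NormedSpace ℝ Y]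
    (a : X →ₗ[ℝ] X →ₗ[ℝ] ℝ) (b : Y →ₗ[ℝ] Y →ₗ[ℝ] ℝ) (d : X →ₗ[ℝ] Y →ₗ[ℝ] ℝ)
    (c₁A c₂A c₁B c₂B c₁M c₂M : ℝ)
    (hc₁A : 0 < c₁A) (hc₂A : 0 < c₂A) (hc₁B : 0 < c₁B) (hc₂B : 0 < c₂B)
    (hc₁M : 0 < c₁M) (hc₂M : 0 < c₂M)
    (ha_symm : ∀ u v : X, a u v = a v u)
    (ha_ell : ∀ v : X, c₁A * ‖v‖ ^ 2 ≤ a v v)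
    (ha_bdd : ∀ u v : X, |a u v| ≤ c₂A * ‖u‖ * ‖v‖)
    (hb_symm : ∀ u w : Y, b u w = b w u)
    (hb_ell : ∀ w : Y, c₁B * ‖w‖ ^ 2 ≤ b w w)
    (hb_bdd : ∀ u w : Y, |b u w| ≤ c₂B * ‖u‖ * ‖w‖)
    (hd_bdd : ∀ (v : X) (w : Y), |d v w| ≤ c₂M * ‖v‖ * ‖w‖)
    (N : ℕ) (φ : Fin N → X) (ψ : Fin N → Y)
    (hφ : LinearIndependent ℝ φ) (hψ : LinearIndependent ℝ ψ)
    (hinfsup : ∀ τh ∈ Submodule.span ℝ (Set.range φ),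
      c₁M * ‖τh‖ ≤ sSup {r : ℝ |
        ∃ vh ∈ Submodule.span ℝ (Set.range ψ), vh ≠ 0 ∧ r = d τh vh / ‖vh‖})
    (A B M : Matrix (Fin N) (Fin N) ℝ)
    (hA : ∀ ℓ k, A ℓ k = a (φ k) (φ ℓ))
    (hB : ∀ ℓ k, B ℓ k = b (ψ k) (ψ ℓ))
    (hM : ∀ ℓ k, M ℓ k = d (φ k) (ψ ℓ)) :
    IsUnit M ∧ B.PosDef ∧
    ∀ x : Fin N → ℝ,
      (c₁A * c₁B / c₂M ^ 2) * (x ⬝ᵥ (Mᵀ * B⁻¹ * M).mulVec x) ≤ x ⬝ᵥ A.mulVec x ∧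
      x ⬝ᵥ A.mulVec x ≤ (c₂A * c₂B / c₁M ^ 2) * (x ⬝ᵥ (Mᵀ * B⁻¹ * M).mulVec x) := by
  have hAx : ∀ x y : Fin N → ℝ, y ⬝ᵥ A.mulVec x
      = a (∑ k, x k • φ k) (∑ l, y l • φ l) := by
    intro x y
    simp only [dotProduct, mulVec, map_sum, LinearMap.sum_apply, map_smul,
      LinearMap.smul_apply, smul_eq_mul, hA, Finset.mul_sum]
    refine Finset.sum_congr rfl fun l _ => Finset.sum_congr rfl fun k _ => ?_
    ring
  have hBx : ∀ x y : Fin N → ℝ, y ⬝ᵥ B.mulVec x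
      = b (∑ k, x k • ψ k) (∑ l, y l • ψ l) := by
    intro x y
    simp only [dotProduct, mulVec, map_sum, LinearMap.sum_apply, map_smul,
      LinearMap.smul_apply, smul_eq_mul, hB, Finset.mul_sum]
    refine Finset.sum_congr rfl fun l _ => Finset.sum_congr rfl fun k _ => ?_
    ring
  have hMx : ∀ x y : Fin N → ℝ, y ⬝ᵥ M.mulVec x
      = d (∑ k, x k • φ k) (∑ l, y l • ψ l) := by
    intro x y
    simp only [dotProduct, mulVec, map_sum, LinearMap.sum_apply, map_smul,
      LinearMap.smul_apply, smul_eq_mul, hM, Finset.mul_sum]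
    refine Finset.sum_congr rfl fun l _ => Finset.sum_congr rfl fun k _ => ?_
    ring
  have memφ : ∀ x : Fin N → ℝ, (∑ k, x k • φ k) ∈ Submodule.span ℝ (Set.range φ) := fun x =>
    Submodule.sum_mem _ fun k _ => Submodule.smul_mem _ _ (Submodule.subset_span ⟨k, rfl⟩)
  have hMunit : IsUnit M := by
    rw [← Matrix.mulVec_injective_iff_isUnit]
    rw [← Matrix.coe_mulVecLin, injective_iff_map_eq_zero]
    intro x hx
    rw [Matrix.mulVecLin_apply] at hx
    have h0 : c₁M * ‖∑ k, x k • φ k‖ ≤ 0 := by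
      refine (hinfsup _ (memφ x)).trans (Real.sSup_nonpos ?_)
      rintro r ⟨v, hv, -, rfl⟩
      obtain ⟨y, rfl⟩ := (Submodule.mem_span_range_iff_exists_fun ℝ).1 hv
      rw [← hMx x y, hx]
      simp
    have h1 : ‖∑ k, x k • φ k‖ = 0 := by
      have := norm_nonneg (∑ k, x k • φ k)
      nlinarith
    rw [norm_eq_zero] at h1
    funext k
    exact Fintype.linearIndependent_iff.1 hφ x h1 k
  have hbnn : ∀ w, 0 ≤ b w w := fun w => le_trans (by positivity) (hb_ell w)
  have hbpos : ∀ w, w ≠ 0 → 0 < b w w := fun w hw => by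
    have := norm_pos_iff.2 hw
    exact lt_of_lt_of_le (by positivity) (hb_ell w)
  have hBpd : B.PosDef := by
    refine Matrix.PosDef.of_dotProduct_mulVec_pos ?_ ?_
    · ext i j
      simp [hB, hb_symm (ψ i) (ψ j)]
    · intro x hx
      rw [star_trivial, hBx]
      refine hbpos _ fun h => hx ?_
      funext k
      exact Fintype.linearIndependent_iff.1 hψ x h k
  refine ⟨hMunit, hBpd, fun x => ?_⟩
  set y := B⁻¹.mulVec (M.mulVec x) with hy
  have hBy : B.mulVec y = M.mulVec x := by
    rw [hy, Matrix.mulVec_mulVec, Matrix.mul_nonsing_inv _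
      ((Matrix.isUnit_iff_isUnit_det _).1 hBpd.isUnit), Matrix.one_mulVec]
  have hS0 : x ⬝ᵥ (Mᵀ * B⁻¹ * M).mulVec x = y ⬝ᵥ M.mulVec x := by
    rw [← Matrix.mulVec_mulVec, ← Matrix.mulVec_mulVec, ← hy, Matrix.mulVec_transpose,
      dotProduct_comm, ← Matrix.dotProduct_mulVec]
  have hSd := hMx x y
  have hSb := hBx y y
  rw [hBy] at hSb
  have hdb : ∀ z : Fin N → ℝ, d (∑ k, x k • φ k) (∑ l, z l • ψ l)
      = b (∑ l, y l • ψ l) (∑ l, z l • ψ l) := fun z => by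
    rw [← hMx, ← hBx, hBy]
  rw [hS0, hAx]
  generalize y ⬝ᵥ M.mulVec x = S at *
  have hu := hinfsup _ (memφ x)
  generalize (∑ k, x k • φ k) = u at *
  generalize (∑ l, y l • ψ l) = w at *
  have hSnn : 0 ≤ S := hSb ▸ hbnn w
  have hann : 0 ≤ a u u := le_trans (by positivity) (ha_ell u)
  constructor
  · rw [div_mul_eq_mul_div, div_le_iff₀ (by positivity)]
    rcases hSnn.eq_or_lt with h | h
    · rw [← h, mul_zero]; positivity
    · have h1 : S ≤ c₂M * ‖u‖ * ‖w‖ := hSd ▸ (le_abs_self _).trans (hd_bdd u w)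
      have h2 : S ^ 2 ≤ (c₂M * ‖u‖ * ‖w‖) ^ 2 := pow_le_pow_left₀ hSnn h1 2
      have h3 : (c₁A * ‖u‖ ^ 2) * (c₁B * ‖w‖ ^ 2) ≤ a u u * S :=
        mul_le_mul (ha_ell u) (hSb ▸ hb_ell w) (by positivity) hann
      refine le_of_mul_le_mul_right ?_ h
      calc c₁A * c₁B * S * S = (c₁A * c₁B) * S ^ 2 := by ring
        _ ≤ (c₁A * c₁B) * (c₂M * ‖u‖ * ‖w‖) ^ 2 := by gcongr
        _ = c₂M ^ 2 * ((c₁A * ‖u‖ ^ 2) * (c₁B * ‖w‖ ^ 2)) := by ring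
        _ ≤ c₂M ^ 2 * (a u u * S) := by gcongr
        _ = _ := by ring
  · rw [div_mul_eq_mul_div, le_div_iff₀ (by positivity)]
    have h1 : c₁M * ‖u‖ ≤ √(S * c₂B) := by
      refine hu.trans (Real.sSup_le ?_ (Real.sqrt_nonneg _))
      rintro r ⟨v, hv, hv0, rfl⟩
      obtain ⟨z, rfl⟩ := (Submodule.mem_span_range_iff_exists_fun ℝ).1 hv
      rw [hdb z]
      generalize (∑ l, z l • ψ l) = v at *
      have hvn := norm_pos_iff.2 hv0
      apply Real.le_sqrt_of_sq_le
      rw [div_pow, div_le_iff₀ (by positivity)]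
      have hq := hbpos v hv0
      have h2 := hbnn (b v v • w - b w v • v)
      simp only [map_sub, map_smul, LinearMap.sub_apply, LinearMap.smul_apply,
        smul_eq_mul, ← hSb, hb_symm v w] at h2
      have h3 : b w v ^ 2 ≤ S * b v v := by
        refine le_of_mul_le_mul_left ?_ hq
        nlinarith
      have h4 : b v v ≤ c₂B * ‖v‖ * ‖v‖ := (le_abs_self _).trans (hb_bdd v v)
      calc _ ≤ S * b v v := h3
        _ ≤ S * (c₂B * ‖v‖ * ‖v‖) := by gcongr
        _ = _ := by ring
    have h2 : (c₁M * ‖u‖) ^ 2 ≤ S * c₂B := by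
      have := pow_le_pow_left₀ (by positivity) h1 2
      rwa [Real.sq_sqrt (by positivity)] at this
    have h3 : a u u ≤ c₂A * ‖u‖ * ‖u‖ := (le_abs_self _).trans (ha_bdd u u)
    calc a u u * c₁M ^ 2 ≤ (c₂A * ‖u‖ * ‖u‖) * c₁M ^ 2 := by gcongr
      _ = c₂A * (c₁M * ‖u‖) ^ 2 := by ring
      _ ≤ c₂A * (S * c₂B) := by gcongr
      _ = _ := by ring
end

section
/- Under the hypotheses of the abstract operator-preconditioning theorem — X, Y real normed spaces; a symmetric bilinear on X with c₁^A·‖v‖² ≤ a(v,v) ≤, in absolute value, c₂^A·‖u‖·‖v‖; b symmetric bilinear on Y with c₁^B·‖w‖² ≤ b(w,w) and |b(u,w)| ≤ c₂^B·‖u‖·‖w‖; d : X × Y → ℝ bilinear with |d(v,w)| ≤ c₂^M·‖v‖·‖w‖; linearly independent φ₁,…,φ_N ∈ X and ψ₁,…,ψ_N ∈ Y; discrete inf-sup constant c₁^M > 0 for d on span{φ_k} × span{ψ_i}; matrices A[ℓ,k] = a(φ_k,φ_ℓ), B[ℓ,k] = b(ψ_k,ψ_ℓ), M[ℓ,k]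 = d(φ_k,ψ_ℓ) — every (real) eigenvalue λ of the preconditioned matrix (M⁻¹BM⁻ᵀ)·A satisfies c₁^A·c₁^B/(c₂^M)² ≤ λ ≤ c₂^A·c₂^B/(c₁^M)², all eigenvalues are real and positive, and hence the spectral condition number satisfies κ((M⁻¹BM⁻ᵀ)·A) = λ_max/λ_min ≤ (c₂^A·c₂^B·(c₂^M)²)/(c₁^A·c₁^B·(c₁^M)²). -/
open Matrix

theorem galerkin_form {X Y : Type*} [AddCommGroup X] [Module ℝ X] [AddCommGroup Y] [Module ℝ Y]
    (f : X →ₗ[ℝ] Y →ₗ[ℝ] ℝ) {N : ℕ} (φ : Fin N → X) (ψ : Fin N → Y)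
    (F : Matrix (Fin N) (Fin N) ℝ) (hF : ∀ l k, F l k = f (φ k) (ψ l)) (x y : Fin N → ℝ) :
    y ⬝ᵥ (F *ᵥ x) = f (∑ k, x k • φ k) (∑ l, y l • ψ l) := by
  simp only [dotProduct, mulVec, hF, map_sum, map_smul, LinearMap.sum_apply, LinearMap.smul_apply,
    smul_eq_mul]
  refine Finset.sum_congr rfl fun l _ => ?_
  congr 1
  exact Finset.sum_congr rfl fun k _ => mul_comm _ _

theorem form_cauchy_schwarz {Y : Type*} [AddCommGroup Y] [Module ℝ Y]
    (b : Y →ₗ[ℝ] Y →ₗ[ℝ] ℝ) (hs : ∀ u w, b u w = b w u) (hp : ∀ w, 0 ≤ b w w) (u w : Y) :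
    (b u w) ^ 2 ≤ b u u * b w w := by
  have h : ∀ t : ℝ, 0 ≤ b u u * (t * t) + (2 * b u w) * t + b w w := by
    intro t
    have := hp (t • u + w)
    simp only [map_add, map_smul, LinearMap.add_apply, LinearMap.smul_apply, smul_eq_mul,
      hs w u] at this
    linarith
  have := discrim_le_zero h
  unfold discrim at this
  nlinarith

/-- Condition-number bound of the operator-preconditioning theorem: under the
hypotheses of the abstract preconditioning theorem, every real eigenvalue `λ`
of the preconditioned matrix `(M⁻¹BM⁻ᵀ)·A` satisfies
`c₁^A·c₁^B/(c₂^M)² ≤ λ ≤ c₂^A·c₂^B/(c₁^M)²` and `λ > 0`; all (complex)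
eigenvalues are real and positive; and any ratio of two eigenvalues (in
particular `κ = λ_max/λ_min`) is bounded by
`(c₂^A·c₂^B·(c₂^M)²)/(c₁^A·c₁^B·(c₁^M)²)`. -/
theorem operator_preconditioning_condition_number_bound
    (X Y : Type*) [NormedAddCommGroup X] [NormedSpace ℝ X]
    [NormedAddCommGroup Y] [NormedSpace ℝ Y]
    (a : X →ₗ[ℝ] X →ₗ[ℝ] ℝ) (b : Y →ₗ[ℝ] Y →ₗ[ℝ] ℝ) (d : X →ₗ[ℝ] Y →ₗ[ℝ] ℝ)
    (c₁A c₂A c₁B c₂B c₁M c₂M : ℝ)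
    (hc₁A : 0 < c₁A) (hc₂A : 0 < c₂A) (hc₁B : 0 < c₁B) (hc₂B : 0 < c₂B)
    (hc₁M : 0 < c₁M) (hc₂M : 0 < c₂M)
    (ha_symm : ∀ u v : X, a u v = a v u)
    (ha_ell : ∀ v : X, c₁A * ‖v‖ ^ 2 ≤ a v v)
    (ha_bdd : ∀ u v : X, |a u v| ≤ c₂A * ‖u‖ * ‖v‖)
    (hb_symm : ∀ u w : Y, b u w = b w u)
    (hb_ell : ∀ w : Y, c₁B * ‖w‖ ^ 2 ≤ b w w)
    (hb_bdd : ∀ u w : Y, |b u w| ≤ c₂B * ‖u‖ * ‖w‖)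
    (hd_bdd : ∀ (v : X) (w : Y), |d v w| ≤ c₂M * ‖v‖ * ‖w‖)
    (N : ℕ) (φ : Fin N → X) (ψ : Fin N → Y)
    (hφ : LinearIndependent ℝ φ) (hψ : LinearIndependent ℝ ψ)
    (hinfsup : ∀ τh ∈ Submodule.span ℝ (Set.range φ),
      c₁M * ‖τh‖ ≤ sSup {r : ℝ |
        ∃ vh ∈ Submodule.span ℝ (Set.range ψ), vh ≠ 0 ∧ r = d τh vh / ‖vh‖})
    (A B M : Matrix (Fin N) (Fin N) ℝ)
    (hA : ∀ ℓ k, A ℓ k = a (φ k) (φ ℓ))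
    (hB : ∀ ℓ k, B ℓ k = b (ψ k) (ψ ℓ))
    (hM : ∀ ℓ k, M ℓ k = d (φ k) (ψ ℓ)) :
    (∀ lam : ℝ, (∃ x : Fin N → ℝ, x ≠ 0 ∧ (M⁻¹ * B * (M⁻¹)ᵀ * A).mulVec x = lam • x) →
      c₁A * c₁B / c₂M ^ 2 ≤ lam ∧ lam ≤ c₂A * c₂B / c₁M ^ 2 ∧ 0 < lam) ∧
    (∀ μ : ℂ, (∃ x : Fin N → ℂ, x ≠ 0 ∧
        ((M⁻¹ * B * (M⁻¹)ᵀ * A).map (fun r : ℝ => (r : ℂ))).mulVec x = μ • x) →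
      ∃ r : ℝ, 0 < r ∧ μ = (r : ℂ)) ∧
    (∀ lam₁ lam₂ : ℝ,
      (∃ x : Fin N → ℝ, x ≠ 0 ∧ (M⁻¹ * B * (M⁻¹)ᵀ * A).mulVec x = lam₁ • x) →
      (∃ x : Fin N → ℝ, x ≠ 0 ∧ (M⁻¹ * B * (M⁻¹)ᵀ * A).mulVec x = lam₂ • x) →
      lam₁ / lam₂ ≤ (c₂A * c₂B * c₂M ^ 2) / (c₁A * c₁B * c₁M ^ 2)) := by
  classical
  have nz : ∀ x : Fin N → ℝ, x ≠ 0 → (∑ k, x k • φ k) ≠ 0 := by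
    intro x hx h
    exact hx (funext fun i => Fintype.linearIndependent_iff.mp hφ x h i)
  have memφ : ∀ x : Fin N → ℝ, (∑ k, x k • φ k) ∈ Submodule.span ℝ (Set.range φ) := fun x =>
    Submodule.sum_mem _ fun k _ => Submodule.smul_mem _ _ (Submodule.subset_span ⟨k, rfl⟩)
  have spanψ : ∀ v ∈ Submodule.span ℝ (Set.range ψ), ∃ y : Fin N → ℝ, ∑ k, y k • ψ k = v := by
    intro v hv
    exact (Submodule.mem_span_range_iff_exists_fun ℝ).mp hv
  have gA := galerkin_form a φ φ A hA
  have gB := galerkin_form b ψ ψ B hB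
  have gM := galerkin_form d φ ψ M hM
  have hinj : ∀ x : Fin N → ℝ, M *ᵥ x = 0 → x = 0 := by
    intro x hx
    by_contra hne
    have h0 := hinfsup _ (memφ x)
    have h1 : sSup {r : ℝ | ∃ vh ∈ Submodule.span ℝ (Set.range ψ), vh ≠ 0 ∧
        r = d (∑ k, x k • φ k) vh / ‖vh‖} ≤ 0 := by
      apply Real.sSup_nonpos
      rintro r ⟨v, hv, -, rfl⟩
      obtain ⟨y, rfl⟩ := spanψ v hv
      rw [← gM, hx]
      simp
    have := norm_pos_iff.mpr (nz x hne)
    nlinarith [mul_pos hc₁M this]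
  have hdet : IsUnit M.det := by
    rw [isUnit_iff_ne_zero]
    intro h
    obtain ⟨v, hv, hv'⟩ := Matrix.exists_mulVec_eq_zero_iff.mpr h
    exact hv (hinj v hv')
  have main : ∀ lam : ℝ, (∃ x : Fin N → ℝ, x ≠ 0 ∧
      (M⁻¹ * B * (M⁻¹)ᵀ * A).mulVec x = lam • x) →
      c₁A * c₁B / c₂M ^ 2 ≤ lam ∧ lam ≤ c₂A * c₂B / c₁M ^ 2 ∧ 0 < lam := by
    rintro lam ⟨x, hx, hev⟩
    obtain ⟨z, hz⟩ : ∃ z, z = (M⁻¹)ᵀ *ᵥ (A *ᵥ x) := ⟨_, rfl⟩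
    have e1 : Mᵀ *ᵥ z = A *ᵥ x := by
      rw [hz, mulVec_mulVec, ← transpose_mul, nonsing_inv_mul _ hdet, transpose_one, one_mulVec]
    have e2 : B *ᵥ z = lam • (M *ᵥ x) := by
      have : M *ᵥ ((M⁻¹ * B * (M⁻¹)ᵀ * A).mulVec x) = B *ᵥ z := by
        rw [hz, mulVec_mulVec, mulVec_mulVec, mulVec_mulVec]
        simp only [← Matrix.mul_assoc]
        rw [mul_nonsing_inv _ hdet, Matrix.one_mul]
      rw [← this, hev, mulVec_smul]
    have hu := nz x hx
    have f1 : a (∑ k, x k • φ k) (∑ k, x k • φ k) = d (∑ k, x k • φ k) (∑ k, z k • ψ k) := by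
      rw [← gA, ← gM, ← e1, dotProduct_mulVec, vecMul_transpose, dotProduct_comm]
    have f2 : ∀ y : Fin N → ℝ, b (∑ k, z k • ψ k) (∑ k, y k • ψ k)
        = lam * d (∑ k, x k • φ k) (∑ k, y k • ψ k) := by
      intro y
      rw [← gB, ← gM, e2, dotProduct_smul, smul_eq_mul]
    have h0 := hinfsup _ (memφ x)
    generalize (∑ k, x k • φ k) = u at *
    have f3 := f2 z
    generalize (∑ k, z k • ψ k) = w at *
    have hun : 0 < ‖u‖ := norm_pos_iff.mpr hu
    have hau : 0 < a u u := lt_of_lt_of_le (by positivity) (ha_ell u)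
    have hw : w ≠ 0 := by
      rintro rfl
      rw [f1] at hau
      simp at hau
    have hwn : 0 < ‖w‖ := norm_pos_iff.mpr hw
    have hbw : 0 < b w w := lt_of_lt_of_le (by positivity) (hb_ell w)
    rw [← f1] at f3
    have hlam : 0 < lam := by
      rw [f3] at hbw
      exact pos_of_mul_pos_left hbw hau.le
    refine ⟨?_, ?_, hlam⟩
    · rw [div_le_iff₀ (by positivity)]
      have k1 : a u u ≤ c₂M * ‖u‖ * ‖w‖ := by
        rw [f1]
        exact (le_abs_self _).trans (hd_bdd u w)
      have k2 : (a u u) ^ 2 ≤ (c₂M * ‖u‖ * ‖w‖) ^ 2 := by gcongr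
      have k3 : (c₁A * ‖u‖ ^ 2) * (c₁B * ‖w‖ ^ 2) ≤ a u u * (lam * a u u) := by
        apply mul_le_mul (ha_ell u) (f3 ▸ hb_ell w) (by positivity) hau.le
      have k4 : (c₁A * c₁B) * (‖u‖ ^ 2 * ‖w‖ ^ 2) ≤ (lam * c₂M ^ 2) * (‖u‖ ^ 2 * ‖w‖ ^ 2) := by
        nlinarith [mul_le_mul_of_nonneg_left k2 hlam.le]
      exact le_of_mul_le_mul_right k4 (by positivity)
    · rw [le_div_iff₀ (by positivity)]
      have k1 : c₁M * ‖u‖ ≤ √(c₂B * b w w) / lam := by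
        refine h0.trans (Real.sSup_le ?_ (by positivity))
        rintro r ⟨v, hv, hv0, rfl⟩
        obtain ⟨y, rfl⟩ := spanψ v hv
        have hy := f2 y
        generalize (∑ k, y k • ψ k) = v at *
        have hvn : 0 < ‖v‖ := norm_pos_iff.mpr hv0
        rw [div_le_div_iff₀ hvn hlam, mul_comm (d u v), ← hy]
        have cs := form_cauchy_schwarz b hb_symm
          (fun w => le_trans (by positivity) (hb_ell w)) w v
        have hbv : b v v ≤ c₂B * ‖v‖ * ‖v‖ := (le_abs_self _).trans (hb_bdd v v)
        refine abs_le_of_sq_le_sq' ?_ (by positivity) |>.2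
        · rw [mul_pow, Real.sq_sqrt (by positivity)]
          nlinarith [mul_le_mul_of_nonneg_left hbv hbw.le]
      rw [le_div_iff₀ hlam] at k1
      have k2 : (c₁M * ‖u‖ * lam) ^ 2 ≤ √(c₂B * b w w) ^ 2 := by gcongr
      rw [Real.sq_sqrt (by positivity), f3] at k2
      have k3 : a u u ≤ c₂A * ‖u‖ * ‖u‖ := (le_abs_self _).trans (ha_bdd u u)
      have k4 : (lam * c₁M ^ 2) * (lam * ‖u‖ ^ 2) ≤ (c₂A * c₂B) * (lam * ‖u‖ ^ 2) := by
        nlinarith [mul_le_mul_of_nonneg_left k3 (mul_pos hc₂B hlam).le]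
      exact le_of_mul_le_mul_right k4 (by positivity)
  refine ⟨main, ?_, ?_⟩
  · rintro μ ⟨x, hx, hev⟩
    have hAt : Aᵀ = A := by
      ext i j
      rw [transpose_apply, hA, hA, ha_symm]
    have hBt : Bᵀ = B := by
      ext i j
      rw [transpose_apply, hB, hB, hb_symm]
    have hsym : (A * (M⁻¹ * B * (M⁻¹)ᵀ * A))ᵀ = A * (M⁻¹ * B * (M⁻¹)ᵀ * A) := by
      simp only [transpose_mul, transpose_transpose, hAt, hBt, Matrix.mul_assoc]
    generalize M⁻¹ * B * (M⁻¹)ᵀ * A = P at *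
    obtain ⟨p, hp⟩ : ∃ p : Fin N → ℝ, p = fun i => (x i).re := ⟨_, rfl⟩
    obtain ⟨q, hq⟩ : ∃ q : Fin N → ℝ, q = fun i => (x i).im := ⟨_, rfl⟩
    have e1 : P *ᵥ p = μ.re • p - μ.im • q := by
      ext i
      have := congrArg Complex.re (congrFun hev i)
      simpa [mulVec, dotProduct, hp, hq] using this
    have e2 : P *ᵥ q = μ.re • q + μ.im • p := by
      ext i
      have := congrArg Complex.im (congrFun hev i)
      simpa [mulVec, dotProduct, hp, hq] using this
    have hpq : p ≠ 0 ∨ q ≠ 0 := by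
      by_contra! h
      apply hx
      ext i
      apply Complex.ext
      · simpa [hp] using congrFun h.1 i
      · simpa [hq] using congrFun h.2 i
    have s1 : p ⬝ᵥ (A *ᵥ (P *ᵥ q)) = q ⬝ᵥ (A *ᵥ (P *ᵥ p)) := by
      rw [mulVec_mulVec, mulVec_mulVec, dotProduct_mulVec, ← mulVec_transpose, hsym,
        dotProduct_comm]
    rw [e1, e2] at s1
    simp only [mulVec_add, mulVec_sub, mulVec_smul, dotProduct_add, dotProduct_sub,
      dotProduct_smul, smul_eq_mul, gA] at s1
    rw [ha_symm (∑ k, q k • φ k) (∑ k, p k • φ k)] at s1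
    have s2 : μ.im * (a (∑ k, p k • φ k) (∑ k, p k • φ k)
        + a (∑ k, q k • φ k) (∑ k, q k • φ k)) = 0 := by linarith
    have pn : ∀ v, 0 ≤ a v v := fun v => le_trans (by positivity) (ha_ell v)
    have pp : ∀ y : Fin N → ℝ, y ≠ 0 → 0 < a (∑ k, y k • φ k) (∑ k, y k • φ k) := fun y hy =>
      have := norm_pos_iff.mpr (nz y hy)
      lt_of_lt_of_le (by positivity) (ha_ell _)
    have him : μ.im = 0 := by
      refine (mul_eq_zero.mp s2).resolve_right (ne_of_gt ?_)
      rcases hpq with h | h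
      · exact add_pos_of_pos_of_nonneg (pp p h) (pn _)
      · exact add_pos_of_nonneg_of_pos (pn _) (pp q h)
    refine ⟨μ.re, ?_, Complex.ext rfl (by simp [him])⟩
    rcases hpq with h | h
    · exact (main μ.re ⟨p, h, by rw [e1, him]; simp⟩).2.2
    · exact (main μ.re ⟨q, h, by rw [e2, him]; simp⟩).2.2
  · intro l₁ l₂ h₁ h₂
    obtain ⟨-, u1, -⟩ := main l₁ h₁
    obtain ⟨v1, -, v3⟩ := main l₂ h₂
    have : l₁ / l₂ ≤ (c₂A * c₂B / c₁M ^ 2) / (c₁A * c₁B / c₂M ^ 2) := by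
      gcongr
    refine this.trans (le_of_eq ?_)
    field_simp
end
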